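/- If m ≡ 4 (mod 6) and m, n ≥ 3, then γ_p^2(f_{n×m}) = 2·⌈(2nm - 5n)/12⌉. -/

import Mathlib

abbrev FlowerVert (n m : ℕ) := ZMod n ⊕ ZMod n × Fin (m - 2)

def flowerRel (n m : ℕ) : FlowerVert n m → FlowerVert n m → Prop
  | Sum.inl i, Sum.inl i' => i' = i + 1
  | Sum.inl i, Sum.inr (i', j) => (i' = i ∧ j.val = 0) ∨ (i = i' + 1 ∧ j.val = m - 3)
  | Sum.inr (i, j), Sum.inr (i', j') => i' = i ∧ j'.val = j.val + 1
  | _, _ => False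

/-- The flower graph `f_{n×m}`. -/
def flowerGraph (n m : ℕ) : SimpleGraph (FlowerVert n m) :=
  SimpleGraph.fromRel (flowerRel n m)

/-- `D` is a paired dominating set of `G`. -/
def IsPairedDominating {V : Type*} (G : SimpleGraph V) (D : Set V) : Prop :=
  (∀ v ∉ D, ∃ u ∈ D, G.Adj u v) ∧
  ∃ M : G.Subgraph, M.verts = D ∧ M.IsMatching

/-- `D` is a `k`-distance paired dominating set of `G`. -/
def IsKDistPairedDominating {V : Type*} (G : SimpleGraph V) (k : ℕ) (D : Set V) : Prop :=
  (∀ v ∉ D, ∃ u ∈ D, G.edist u v ≤ k) ∧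
  ∃ M : G.Subgraph, M.verts = D ∧ M.IsMatching

/-- The paired domination number `γ_p(G)`. -/
noncomputable def pairedDomNum {V : Type*} (G : SimpleGraph V) : ℕ :=
  sInf {c | ∃ D : Set V, IsPairedDominating G D ∧ D.ncard = c}

/-- The `k`-distance paired domination number `γ_p^k(G)`. -/
noncomputable def kDistPairedDomNum {V : Type*} (G : SimpleGraph V) (k : ℕ) : ℕ :=
  sInf {c | ∃ D : Set V, IsKDistPairedDominating G k D ∧ D.ncard = c}

/-- The `k`-distance domination number `γ^k(G)`. -/
noncomputable def kDistDomNum {V : Type*} (G : SimpleGraph V) (k : ℕ) : ℕ :=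
  sInf {c | ∃ D : Set V, (∀ v ∉ D, ∃ u ∈ D, G.edist u v ≤ k) ∧ D.ncard = c}

/-!
Write `m = 6 * k + 4`, so that the claimed value is `2 * (n * k + ⌈n / 4⌉)`.

Lower bound: the flower graph is an edge-disjoint union of `n` cycles (the petals) through
consecutive hubs, so each edge of the matching lies on exactly one petal. Such an edge reaches at
most six vertices `v_{i,j}` of its petal within distance two, and all but the two outermost
`v_{i,j}` on either side can only be reached from inside the petal; hence every petal carries at
least `k` edges. A petal is rich if it carries `k + 1`. A matching edge at a hub, or at a
neighbour of a hub, wastes part of its reach, which makes its petal rich; if there is no such edge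
around `u_i`, then all but the last of the `v_{i,j}` are dominated from inside the `i`-th petal,
which is rich as well. So every hub is near a rich petal, each rich petal is near only four hubs,
and there are at least `⌈n / 4⌉` rich petals.

Upper bound: take adjacent pairs of hubs, one pair every four hubs, and in each petal `k` adjacent
pairs, one every six positions, shifted according to which hubs near the petal have been taken.
-/

section PairedDomination

variable {V : Type*} {G : SimpleGraph V}

theorem edist_le_two_iff {x y : V} :
    G.edist x y ≤ (2 : ℕ) ↔ x = y ∨ G.Adj x y ∨ ∃ w, G.Adj x w ∧ G.Adj w y := by
  rw [Nat.cast_ofNat, ← not_lt, SimpleGraph.two_lt_edist_iff, ← Set.not_nonempty_iff_eq_empty]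
  simp only [Set.Nonempty, SimpleGraph.mem_commonNeighbors, SimpleGraph.adj_comm _ y]
  by_cases hxy : x = y <;> by_cases hadj : G.Adj x y <;> simp [hxy, hadj]

theorem IsKDistPairedDominating.exists_edist_le {k : ℕ} {D : Set V}
    (hD : IsKDistPairedDominating G k D) (v : V) : ∃ u ∈ D, G.edist u v ≤ k := by
  by_cases hv : v ∈ D
  · exact ⟨v, hv, by simp⟩
  · exact hD.1 v hv

theorem isKDistPairedDominating_range_of_pairs {ι : Type*} {e : ι → Fin 2 → V} {k : ℕ}
    (hadj : ∀ s, G.Adj (e s 0) (e s 1)) (hinj : Function.Injective (Function.uncurry e))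
    (hdom : ∀ v, ∃ s b, G.edist (e s b) v ≤ k) :
    IsKDistPairedDominating G k (Set.range (Function.uncurry e)) := by
  refine ⟨fun v _ => ?_, ⨆ s, G.subgraphOfAdj (hadj s), ?_,
    SimpleGraph.Subgraph.IsMatching.iSup
      (fun s => SimpleGraph.Subgraph.IsMatching.subgraphOfAdj (hadj s)) fun s t hst => ?_⟩
  · obtain ⟨s, b, hs⟩ := hdom v
    exact ⟨e s b, ⟨(s, b), rfl⟩, hs⟩
  · ext v
    simp [Fin.exists_fin_two, eq_comm]
  · have hne : ∀ b c, e s b ≠ e t c := fun b c h =>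
      hst (Prod.ext_iff.1 (hinj (a₁ := (s, b)) (a₂ := (t, c)) h)).1
    simp [(hne _ _).symm]

theorem two_mul_ncard_edgeSet_of_isMatching {M : G.Subgraph} (hM : M.IsMatching) :
    2 * M.edgeSet.ncard = M.verts.ncard := by
  have fiber (e : M.edgeSet) : Nat.card {v // hM.toEdge v = e} = 2 := by
    obtain ⟨⟨x, y⟩, h⟩ := e
    have hne : (⟨x, h.fst_mem⟩ : M.verts) ≠ ⟨y, h.snd_mem⟩ :=
      fun hxy => h.ne (congrArg Subtype.val hxy)
    exact (congrArg Set.ncard (hM.toEdge_preimage_singleton h)).trans (Set.ncard_pair hne)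
  have fiberEquiv (e : M.edgeSet) : {v // hM.toEdge v = e} ≃ Fin 2 :=
    have : Finite {v // hM.toEdge v = e} := Nat.finite_of_card_ne_zero (by simp [fiber e])
    Finite.equivFinOfCardEq (fiber e)
  rw [← Nat.card_coe_set_eq, ← Nat.card_coe_set_eq, mul_comm,
    ← Nat.card_congr (Equiv.sigmaFiberEquiv hM.toEdge),
    Nat.card_congr (Equiv.sigmaEquivProdOfEquiv fiberEquiv), Nat.card_prod, Nat.card_fin]

theorem kDistPairedDomNum_eq_of_forall_le {k c : ℕ} {D : Set V}
    (hD : IsKDistPairedDominating G k D) (hcard : D.ncard = c)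
    (hmin : ∀ D', IsKDistPairedDominating G k D' → c ≤ D'.ncard) :
    kDistPairedDomNum G k = c := by
  refine IsLeast.csInf_eq ⟨⟨D, hD, hcard⟩, ?_⟩
  rintro _ ⟨D', hD', rfl⟩
  exact hmin D' hD'

end PairedDomination

section Adjacency

variable {n m : ℕ}

theorem flowerGraph_adj_hub_hub (hn : n ≠ 1) {a b : ZMod n} :
    (flowerGraph n m).Adj (Sum.inl a) (Sum.inl b) ↔ b = a + 1 ∨ a = b + 1 := by
  have : Nontrivial (ZMod n) := ZMod.nontrivial_iff.2 hn
  simp only [flowerGraph, SimpleGraph.fromRel_adj, flowerRel, ne_eq, Sum.inl.injEq]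
  refine ⟨And.right, fun h => ⟨?_, h⟩⟩
  rintro rfl
  simp at h

theorem flowerGraph_adj_petal_iff {x : FlowerVert n m} {i : ZMod n} {p : Fin (m - 2)} :
    (flowerGraph n m).Adj x (Sum.inr (i, p)) ↔
      (∃ q : Fin (m - 2), x = Sum.inr (i, q) ∧ (p.val = q.val + 1 ∨ q.val = p.val + 1)) ∨
        (p.val = 0 ∧ x = Sum.inl i) ∨ (p.val + 3 = m ∧ x = Sum.inl (i + 1)) := by
  have := p.isLt
  rcases x with a | ⟨a, q⟩
  · simp only [flowerGraph, SimpleGraph.fromRel_adj, flowerRel]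
    grind
  · simp only [flowerGraph, SimpleGraph.fromRel_adj, flowerRel]
    grind

theorem flowerGraph_edist_petal_petal_le_two {i : ZMod n} {p q : Fin (m - 2)}
    (hpq : p.val ≤ q.val + 2) (hqp : q.val ≤ p.val + 2) :
    (flowerGraph n m).edist (Sum.inr (i, q)) (Sum.inr (i, p)) ≤ (2 : ℕ) := by
  rcases eq_or_ne q p with rfl | hne
  · simp
  have : q.val ≠ p.val := Fin.val_ne_of_ne hne
  rw [edist_le_two_iff]
  by_cases hone : p.val = q.val + 1 ∨ q.val = p.val + 1
  · exact Or.inr (Or.inl (flowerGraph_adj_petal_iff.2 (Or.inl ⟨q, rfl, hone⟩)))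
  · refine Or.inr (Or.inr ⟨Sum.inr (i, ⟨(p.val + q.val) / 2, by omega⟩), ?_, ?_⟩)
    · exact flowerGraph_adj_petal_iff.2 (Or.inl ⟨q, rfl, by dsimp only; omega⟩)
    · exact flowerGraph_adj_petal_iff.2 (Or.inl ⟨_, rfl, by dsimp only; omega⟩)

theorem flowerGraph_edist_left_hub_petal_le_two {i : ZMod n} {p : Fin (m - 2)}
    (hp : p.val ≤ 1) : (flowerGraph n m).edist (Sum.inl i) (Sum.inr (i, p)) ≤ (2 : ℕ) := by
  have := p.isLt
  rw [edist_le_two_iff]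
  by_cases hp₀ : p.val = 0
  · exact Or.inr (Or.inl (flowerGraph_adj_petal_iff.2 (Or.inr (Or.inl ⟨hp₀, rfl⟩))))
  · refine Or.inr (Or.inr ⟨Sum.inr (i, ⟨0, by omega⟩), ?_, ?_⟩)
    · exact flowerGraph_adj_petal_iff.2 (Or.inr (Or.inl ⟨rfl, rfl⟩))
    · exact flowerGraph_adj_petal_iff.2 (Or.inl ⟨_, rfl, by dsimp only; omega⟩)

theorem flowerGraph_edist_right_hub_petal_le_two {i : ZMod n} {p : Fin (m - 2)}
    (hp : m ≤ p.val + 4) :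
    (flowerGraph n m).edist (Sum.inl (i + 1)) (Sum.inr (i, p)) ≤ (2 : ℕ) := by
  have := p.isLt
  rw [edist_le_two_iff]
  by_cases hp₀ : p.val + 3 = m
  · exact Or.inr (Or.inl (flowerGraph_adj_petal_iff.2 (Or.inr (Or.inr ⟨hp₀, rfl⟩))))
  · refine Or.inr (Or.inr ⟨Sum.inr (i, ⟨m - 3, by omega⟩), ?_, ?_⟩)
    · exact flowerGraph_adj_petal_iff.2 (Or.inr (Or.inr ⟨by dsimp only; omega, rfl⟩))
    · exact flowerGraph_adj_petal_iff.2 (Or.inl ⟨_, rfl, by dsimp only; omega⟩)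

theorem flowerGraph_edist_petal_le_two_iff {x : FlowerVert n m} {i : ZMod n} {p : Fin (m - 2)} :
    (flowerGraph n m).edist x (Sum.inr (i, p)) ≤ (2 : ℕ) ↔
      (∃ q : Fin (m - 2), x = Sum.inr (i, q) ∧ p.val ≤ q.val + 2 ∧ q.val ≤ p.val + 2) ∨
        (p.val ≤ 1 ∧ x = Sum.inl i) ∨ (m ≤ p.val + 4 ∧ x = Sum.inl (i + 1)) ∨
        (p.val = 0 ∧ (flowerGraph n m).Adj x (Sum.inl i)) ∨
        (p.val + 3 = m ∧ (flowerGraph n m).Adj x (Sum.inl (i + 1))) := by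
  constructor
  · rw [edist_le_two_iff]
    rintro (rfl | h | ⟨w, hxw, hwp⟩)
    · exact Or.inl ⟨p, rfl, by omega, by omega⟩
    · rcases flowerGraph_adj_petal_iff.1 h with ⟨q, rfl, hq⟩ | ⟨hp, rfl⟩ | ⟨hp, rfl⟩
      · exact Or.inl ⟨q, rfl, by omega, by omega⟩
      · exact Or.inr (Or.inl ⟨by omega, rfl⟩)
      · exact Or.inr (Or.inr (Or.inl ⟨by omega, rfl⟩))
    · rcases flowerGraph_adj_petal_iff.1 hwp with ⟨r, rfl, hr⟩ | ⟨hp, rfl⟩ | ⟨hp, rfl⟩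
      · rcases flowerGraph_adj_petal_iff.1 hxw with ⟨q, rfl, hq⟩ | ⟨hr₀, rfl⟩ | ⟨hr₀, rfl⟩
        · exact Or.inl ⟨q, rfl, by omega, by omega⟩
        · exact Or.inr (Or.inl ⟨by omega, rfl⟩)
        · exact Or.inr (Or.inr (Or.inl ⟨by omega, rfl⟩))
      · exact Or.inr (Or.inr (Or.inr (Or.inl ⟨hp, hxw⟩)))
      · exact Or.inr (Or.inr (Or.inr (Or.inr ⟨hp, hxw⟩)))
  · rintro (⟨q, rfl, hpq, hqp⟩ | ⟨hp, rfl⟩ | ⟨hp, rfl⟩ | ⟨hp, hx⟩ | ⟨hp, hx⟩)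
    · exact flowerGraph_edist_petal_petal_le_two hpq hqp
    · exact flowerGraph_edist_left_hub_petal_le_two hp
    · exact flowerGraph_edist_right_hub_petal_le_two hp
    · exact edist_le_two_iff.2
        (Or.inr (Or.inr ⟨_, hx, flowerGraph_adj_petal_iff.2 (Or.inr (Or.inl ⟨hp, rfl⟩))⟩))
    · exact edist_le_two_iff.2
        (Or.inr (Or.inr ⟨_, hx, flowerGraph_adj_petal_iff.2 (Or.inr (Or.inr ⟨hp, rfl⟩))⟩))

end Adjacency

section Petals

variable {n m : ℕ}

/-- The `i`-th petal: the cycle through the hubs `u_i`, `u_{i+1}` and the vertices `v_{i,j}`. -/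
def flowerPetal (i : ZMod n) : Set (FlowerVert n m)
  | Sum.inl a => a = i ∨ a = i + 1
  | Sum.inr (a, _) => a = i

@[simp]
theorem inl_mem_flowerPetal {i a : ZMod n} :
    (Sum.inl a : FlowerVert n m) ∈ flowerPetal i ↔ a = i ∨ a = i + 1 := Iff.rfl

@[simp]
theorem inr_mem_flowerPetal {i a : ZMod n} {p : Fin (m - 2)} :
    (Sum.inr (a, p) : FlowerVert n m) ∈ flowerPetal i ↔ a = i := Iff.rfl

theorem mem_flowerPetal_of_adj {x : FlowerVert n m} {i : ZMod n} {p : Fin (m - 2)}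
    (h : (flowerGraph n m).Adj x (Sum.inr (i, p))) : x ∈ flowerPetal i := by
  rcases flowerGraph_adj_petal_iff.1 h with ⟨q, rfl, -⟩ | ⟨-, rfl⟩ | ⟨-, rfl⟩
  exacts [rfl, Or.inl rfl, Or.inr rfl]

theorem exists_mem_flowerPetal_of_adj (hn : n ≠ 1) {x y : FlowerVert n m}
    (h : (flowerGraph n m).Adj x y) : ∃ i, x ∈ flowerPetal i ∧ y ∈ flowerPetal i := by
  rcases x with a | ⟨i, p⟩
  · rcases y with b | ⟨i, p⟩
    · rcases (flowerGraph_adj_hub_hub hn).1 h with rfl | rfl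
      · exact ⟨a, Or.inl rfl, Or.inr rfl⟩
      · exact ⟨b, Or.inr rfl, Or.inl rfl⟩
    · exact ⟨i, mem_flowerPetal_of_adj h, rfl⟩
  · exact ⟨i, rfl, mem_flowerPetal_of_adj h.symm⟩

theorem flowerPetal_inter_subsingleton (hn : 3 ≤ n) {i j : ZMod n} (hij : i ≠ j) :
    (flowerPetal i ∩ flowerPetal j : Set (FlowerVert n m)).Subsingleton := by
  have two_ne_zero : (2 : ZMod n) ≠ 0 := fun h₂ =>
    absurd (Nat.le_of_dvd two_pos ((ZMod.natCast_eq_zero_iff 2 n).1 (mod_cast h₂))) (by omega)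
  have not_two_cycle : ¬ (i = j + 1 ∧ j = i + 1) := fun h => two_ne_zero (by grind)
  rintro (a | ⟨a, p⟩) ⟨hai, haj⟩ (b | ⟨b, q⟩) ⟨hbi, hbj⟩ <;>
    simp only [inl_mem_flowerPetal, inr_mem_flowerPetal] at hai haj hbi hbj <;> grind

open Classical in
/-- The edges of `M` that lie on the `i`-th petal. -/
noncomputable def petalEdges [NeZero n] (M : (flowerGraph n m).Subgraph) (i : ZMod n) :
    Finset (Sym2 (FlowerVert n m)) :=
  {e | e ∈ M.edgeSet ∧ ∀ x ∈ e, x ∈ flowerPetal i}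

theorem mem_petalEdges [NeZero n] {M : (flowerGraph n m).Subgraph} {i : ZMod n}
    {x y : FlowerVert n m} :
    s(x, y) ∈ petalEdges M i ↔ M.Adj x y ∧ x ∈ flowerPetal i ∧ y ∈ flowerPetal i := by
  simp [petalEdges]

theorem pairwiseDisjoint_petalEdges [NeZero n] (hn : 3 ≤ n) (M : (flowerGraph n m).Subgraph) :
    Set.univ.PairwiseDisjoint (petalEdges M) := by
  refine fun i _ j _ hij => Finset.disjoint_left.2 fun e => ?_
  induction e with | h x y =>
  rw [mem_petalEdges, mem_petalEdges]
  rintro ⟨hadj, hxi, hyi⟩ ⟨-, hxj, hyj⟩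
  exact hadj.ne (flowerPetal_inter_subsingleton hn hij ⟨hxi, hxj⟩ ⟨hyi, hyj⟩)

theorem two_mul_sum_card_petalEdges_le [NeZero n] (hn : 3 ≤ n)
    {M : (flowerGraph n m).Subgraph} (hM : M.IsMatching) :
    2 * ∑ i, (petalEdges M i).card ≤ M.verts.ncard := by
  classical
  rw [← two_mul_ncard_edgeSet_of_isMatching hM, ← Finset.card_biUnion
    fun i _ j _ hij => pairwiseDisjoint_petalEdges hn M (Set.mem_univ i) (Set.mem_univ j) hij,
    ← Set.ncard_coe_finset]
  gcongr
  · exact Set.toFinite _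
  · intro e
    simp +contextual [petalEdges]

open Classical in
/-- The positions `p` such that the vertex at position `p` of the `i`-th petal is within distance
two, along that petal, of an endpoint of `e` other than a hub. -/
noncomputable def edgeReach (i : ZMod n) (e : Sym2 (FlowerVert n m)) : Finset ℕ :=
  {p ∈ Finset.range (m - 2) | ∃ q : Fin (m - 2), Sum.inr (i, q) ∈ e ∧ p ≤ q + 2 ∧ q ≤ p + 2}

theorem exists_position_of_mem_edgeSet (i : ZMod n) {e : Sym2 (FlowerVert n m)}
    (he : e ∈ (flowerGraph n m).edgeSet) :
    ∃ a : ℕ, ∀ q : Fin (m - 2), Sum.inr (i, q) ∈ e → q = a ∨ q = a + 1 := by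
  induction e with | h x y =>
  rw [SimpleGraph.mem_edgeSet] at he
  rcases x with a | ⟨j, p⟩
  · rcases y with b | ⟨j, p⟩
    · exact ⟨0, by simp⟩
    · exact ⟨p, by simp +contextual⟩
  · rcases y with b | ⟨l, q⟩
    · exact ⟨p, by simp +contextual⟩
    · rw [flowerGraph_adj_petal_iff] at he
      refine ⟨min p q, fun r hr => ?_⟩
      simp only [Sym2.mem_iff, Sum.inr.injEq, Prod.mk.injEq] at hr he
      grind

theorem card_edgeReach_le (i : ZMod n) {e : Sym2 (FlowerVert n m)}
    (he : e ∈ (flowerGraph n m).edgeSet) : (edgeReach i e).card ≤ 6 := by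
  obtain ⟨a, ha⟩ := exists_position_of_mem_edgeSet i he
  have hsub : edgeReach i e ⊆ Finset.Icc (a - 2) (a + 3) := by
    intro p hp
    obtain ⟨-, q, hq, hpq, hqp⟩ := Finset.mem_filter.1 hp
    have := ha q hq
    exact Finset.mem_Icc.2 (by omega)
  have := Finset.card_le_card hsub
  rw [Nat.card_Icc] at this
  omega

theorem position_le_one_or_ge_of_mem_edgeSet {i : ZMod n} {x y : FlowerVert n m}
    (h : (flowerGraph n m).Adj x y)
    (hx : ∀ q : Fin (m - 2), x = Sum.inr (i, q) → q.val = 0 ∨ q.val + 3 = m) :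
    (∀ q : Fin (m - 2), Sum.inr (i, q) ∈ s(x, y) → q.val ≤ 1) ∨
      ∀ q : Fin (m - 2), Sum.inr (i, q) ∈ s(x, y) → m ≤ q.val + 4 := by
  simp only [Sym2.mem_iff]
  rcases y with b | ⟨j, p⟩
  · by_cases hq : ∃ q : Fin (m - 2), x = Sum.inr (i, q) ∧ q.val = 0 <;> grind
  · rw [flowerGraph_adj_petal_iff] at h
    grind

theorem card_edgeReach_inter_Ico_le {i : ZMod n} {x y : FlowerVert n m}
    (h : (flowerGraph n m).Adj x y)
    (hx : ∀ q : Fin (m - 2), x = Sum.inr (i, q) → q.val = 0 ∨ q.val + 3 = m) :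
    (edgeReach i s(x, y) ∩ Finset.Ico 2 (m - 4)).card ≤ 2 := by
  have hsub : edgeReach i s(x, y) ∩ Finset.Ico 2 (m - 4) ⊆ Finset.Ico 2 4 ∨
      edgeReach i s(x, y) ∩ Finset.Ico 2 (m - 4) ⊆ Finset.Ico (m - 6) (m - 4) := by
    refine (position_le_one_or_ge_of_mem_edgeSet h hx).imp ?_ ?_ <;> intro hpos p hp <;>
      obtain ⟨hreach, hmid⟩ := Finset.mem_inter.1 hp <;>
      obtain ⟨-, q, hq, hpq, hqp⟩ := Finset.mem_filter.1 hreach <;>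
      rw [Finset.mem_Ico] at hmid ⊢ <;> have := hpos q hq <;> omega
  rcases hsub with hsub | hsub <;>
  · have := Finset.card_le_card hsub
    rw [Nat.card_Ico] at this
    omega

end Petals

section LowerBound

variable {n m : ℕ} [NeZero n] {M : (flowerGraph n m).Subgraph}

theorem exists_mem_edgeReach (hM : M.IsMatching) {i : ZMod n} {q : Fin (m - 2)}
    (hq : Sum.inr (i, q) ∈ M.verts) {p : ℕ} (hp : p < m - 2) (hpq : p ≤ q.val + 2)
    (hqp : q.val ≤ p + 2) : ∃ e ∈ petalEdges M i, p ∈ edgeReach i e := by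
  obtain ⟨y, hy, -⟩ := hM hq
  exact ⟨s(Sum.inr (i, q), y), mem_petalEdges.2 ⟨hy, rfl, mem_flowerPetal_of_adj hy.adj_sub.symm⟩,
    Finset.mem_filter.2 ⟨Finset.mem_range.2 hp, q, Sym2.mem_mk_left _ _, hpq, hqp⟩⟩

theorem mem_edgeSet_of_mem_petalEdges {i : ZMod n} {e : Sym2 (FlowerVert n m)}
    (he : e ∈ petalEdges M i) : e ∈ (flowerGraph n m).edgeSet := by
  induction e with | h x y =>
  exact (mem_petalEdges.1 he).1.adj_sub

theorem card_biUnion_edgeReach_le {i : ZMod n} {s : Finset (Sym2 (FlowerVert n m))}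
    (hs : s ⊆ petalEdges M i) : (s.biUnion (edgeReach i)).card ≤ 6 * s.card := by
  rw [mul_comm]
  exact Finset.card_biUnion_le_card_mul _ _ 6 fun e he =>
    card_edgeReach_le i (mem_edgeSet_of_mem_petalEdges (hs he))

theorem Ico_subset_biUnion_edgeReach (hM : M.IsMatching)
    (hdom : ∀ v, ∃ u ∈ M.verts, (flowerGraph n m).edist u v ≤ (2 : ℕ)) (i : ZMod n) :
    Finset.Ico 2 (m - 4) ⊆ (petalEdges M i).biUnion (edgeReach i) := by
  intro p hp
  rw [Finset.mem_Ico] at hp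
  rw [Finset.mem_biUnion]
  obtain ⟨x, hx, hdist⟩ := hdom (Sum.inr (i, ⟨p, by omega⟩))
  rcases flowerGraph_edist_petal_le_two_iff.1 hdist with
    ⟨q, rfl, hpq, hqp⟩ | ⟨h, -⟩ | ⟨h, -⟩ | ⟨h, -⟩ | ⟨h, -⟩ <;> dsimp only at *
  · exact exists_mem_edgeReach hM hx (by omega) hpq hqp
  all_goals omega

theorem le_six_mul_card_petalEdges_add_six (hM : M.IsMatching)
    (hdom : ∀ v, ∃ u ∈ M.verts, (flowerGraph n m).edist u v ≤ (2 : ℕ)) (i : ZMod n) :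
    m ≤ 6 * (petalEdges M i).card + 6 := by
  have hcard := (Finset.card_le_card (Ico_subset_biUnion_edgeReach hM hdom i)).trans
    (card_biUnion_edgeReach_le subset_rfl)
  rw [Nat.card_Ico] at hcard
  omega

/-- The petals with more edges than needed to dominate the vertices that are far from its hubs;
for `m = 6 * k + 4` these are the petals with at least `k + 1` edges. -/
noncomputable def richPetals (M : (flowerGraph n m).Subgraph) : Finset (ZMod n) :=
  {i | m ≤ 6 * (petalEdges M i).card + 3}

theorem mem_richPetals_of_mem_petalEdges (hM : M.IsMatching)
    (hdom : ∀ v, ∃ u ∈ M.verts, (flowerGraph n m).edist u v ≤ (2 : ℕ)) {i : ZMod n}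
    {x y : FlowerVert n m} (hxy : s(x, y) ∈ petalEdges M i)
    (hx : ∀ q : Fin (m - 2), x = Sum.inr (i, q) → q.val = 0 ∨ q.val + 3 = m) :
    i ∈ richPetals M := by
  have hsub : Finset.Ico 2 (m - 4) ⊆ (edgeReach i s(x, y) ∩ Finset.Ico 2 (m - 4)) ∪
      ((petalEdges M i).erase s(x, y)).biUnion (edgeReach i) := by
    intro p hp
    obtain ⟨e, he, hpe⟩ := Finset.mem_biUnion.1 (Ico_subset_biUnion_edgeReach hM hdom i hp)
    by_cases hexy : e = s(x, y)
    · exact Finset.mem_union_left _ (Finset.mem_inter.2 ⟨hexy ▸ hpe, hp⟩)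
    · exact Finset.mem_union_right _
        (Finset.mem_biUnion.2 ⟨e, Finset.mem_erase.2 ⟨hexy, he⟩, hpe⟩)
  have hfirst := card_edgeReach_inter_Ico_le (mem_petalEdges.1 hxy).1.adj_sub hx
  have hothers := card_biUnion_edgeReach_le (Finset.erase_subset s(x, y) (petalEdges M i))
  have hcard := (Finset.card_le_card hsub).trans (Finset.card_union_le _ _)
  rw [Nat.card_Ico] at hcard
  have := Finset.card_erase_add_one hxy
  simp only [richPetals, Finset.mem_filter_univ]
  omega

theorem exists_mem_richPetals_of_mem_verts (hn : n ≠ 1) (hM : M.IsMatching)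
    (hdom : ∀ v, ∃ u ∈ M.verts, (flowerGraph n m).edist u v ≤ (2 : ℕ)) {x : FlowerVert n m}
    (hxM : x ∈ M.verts)
    (hx : ∀ i, ∀ q : Fin (m - 2), x = Sum.inr (i, q) → q.val = 0 ∨ q.val + 3 = m) :
    ∃ i ∈ richPetals M, x ∈ flowerPetal i := by
  obtain ⟨y, hxy, -⟩ := hM hxM
  obtain ⟨i, hxi, hyi⟩ := exists_mem_flowerPetal_of_adj hn hxy.adj_sub
  exact ⟨i, mem_richPetals_of_mem_petalEdges hM hdom (mem_petalEdges.2 ⟨hxy, hxi, hyi⟩) (hx i), hxi⟩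

theorem mem_richPetals_of_no_near_hub (hn : n ≠ 1) (hM : M.IsMatching)
    (hdom : ∀ v, ∃ u ∈ M.verts, (flowerGraph n m).edist u v ≤ (2 : ℕ)) {i : ZMod n}
    (hfar : ∀ x ∈ M.verts, x ≠ Sum.inl i ∧ ¬ (flowerGraph n m).Adj x (Sum.inl i)) :
    i ∈ richPetals M := by
  have hsub : Finset.range (m - 3) ⊆ (petalEdges M i).biUnion (edgeReach i) := by
    intro p hp
    rw [Finset.mem_range] at hp
    rw [Finset.mem_biUnion]
    obtain ⟨x, hx, hdist⟩ := hdom (Sum.inr (i, ⟨p, by omega⟩))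
    rcases flowerGraph_edist_petal_le_two_iff.1 hdist with
      ⟨q, rfl, hpq, hqp⟩ | ⟨-, rfl⟩ | ⟨-, rfl⟩ | ⟨-, h⟩ | ⟨h, -⟩
    · exact exists_mem_edgeReach hM hx (by omega) hpq hqp
    · exact absurd rfl (hfar _ hx).1
    · exact absurd ((flowerGraph_adj_hub_hub hn).2 (Or.inr rfl)) (hfar _ hx).2
    · exact absurd h (hfar _ hx).2
    · dsimp only at h
      omega
  have hcard := (Finset.card_le_card hsub).trans
    (card_biUnion_edgeReach_le subset_rfl)
  rw [Finset.card_range] at hcard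
  simp only [richPetals, Finset.mem_filter_univ]
  omega

theorem exists_mem_richPetals_near (hn : n ≠ 1) (hM : M.IsMatching)
    (hdom : ∀ v, ∃ u ∈ M.verts, (flowerGraph n m).edist u v ≤ (2 : ℕ)) (a : ZMod n) :
    ∃ i ∈ richPetals M, a ∈ ({i - 1, i, i + 1, i + 2} : Finset (ZMod n)) := by
  by_cases hfar : ∀ x ∈ M.verts, x ≠ Sum.inl a ∧ ¬ (flowerGraph n m).Adj x (Sum.inl a)
  · exact ⟨a, mem_richPetals_of_no_near_hub hn hM hdom hfar, by simp⟩
  push Not at hfar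
  obtain ⟨x, hxM, hxa⟩ := hfar
  rw [← or_iff_not_imp_left] at hxa
  rcases x with b | ⟨b, q⟩
  · obtain ⟨i, hi, hbi⟩ := exists_mem_richPetals_of_mem_verts hn hM hdom hxM (by simp)
    rw [flowerGraph_adj_hub_hub hn, Sum.inl.injEq] at hxa
    rw [inl_mem_flowerPetal] at hbi
    refine ⟨i, hi, ?_⟩
    simp only [Finset.mem_insert, Finset.mem_singleton]
    grind
  · rw [SimpleGraph.adj_comm, flowerGraph_adj_petal_iff] at hxa
    obtain ⟨i, hi, hbi⟩ := exists_mem_richPetals_of_mem_verts hn hM hdom hxM (by grind)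
    rw [inr_mem_flowerPetal] at hbi
    refine ⟨i, hi, ?_⟩
    simp only [Finset.mem_insert, Finset.mem_singleton]
    grind

theorem le_four_mul_card_richPetals (hn : n ≠ 1) (hM : M.IsMatching)
    (hdom : ∀ v, ∃ u ∈ M.verts, (flowerGraph n m).edist u v ≤ (2 : ℕ)) :
    n ≤ 4 * (richPetals M).card := by
  have hcover : (Finset.univ : Finset (ZMod n)) ⊆
      (richPetals M).biUnion fun i => {i - 1, i, i + 1, i + 2} := fun a _ =>
    Finset.mem_biUnion.2 (exists_mem_richPetals_near hn hM hdom a)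
  calc n = (Finset.univ : Finset (ZMod n)).card := (ZMod.card n).symm
    _ ≤ _ := Finset.card_le_card hcover
    _ ≤ (richPetals M).card * 4 := Finset.card_biUnion_le_card_mul _ _ 4 fun _ _ =>
      Finset.card_le_four
    _ = 4 * (richPetals M).card := mul_comm _ _

end LowerBound

theorem IsKDistPairedDominating.le_ncard_of_flowerGraph {n k : ℕ} (hn : 3 ≤ n)
    {D : Set (FlowerVert n (6 * k + 4))}
    (hD : IsKDistPairedDominating (flowerGraph n (6 * k + 4)) 2 D) :
    2 * (n * k + (n + 3) / 4) ≤ D.ncard := by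
  have : NeZero n := ⟨by omega⟩
  have hdom := hD.exists_edist_le
  obtain ⟨-, M, rfl, hM⟩ := hD
  have hpetal (i : ZMod n) :
      k + (if i ∈ richPetals M then 1 else 0) ≤ (petalEdges M i).card := by
    have := le_six_mul_card_petalEdges_add_six hM hdom i
    split_ifs with hi
    · have := (Finset.mem_filter.1 hi).2
      omega
    · omega
  have hsum : n * k + (richPetals M).card ≤ ∑ i, (petalEdges M i).card := by
    refine le_trans (le_of_eq ?_) (Finset.sum_le_sum fun i _ => hpetal i)
    simp [Finset.sum_add_distrib, ZMod.card]
  have hrich := le_four_mul_card_richPetals (by omega) hM hdom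
  have hverts := two_mul_sum_card_petalEdges_le hn hM
  omega

section UpperBound

variable {n : ℕ}

/-- The index of the hub number `ε` of the `s`-th hub pair of the optimal set. The pairs start at
the multiples of four, the last one being moved back, if necessary, so as not to wrap around. -/
def hubIndex (n : ℕ) (s : Fin ((n + 3) / 4)) (ε : Fin 2) : ZMod n :=
  (min (4 * s.val) (n - 2) + ε.val : ℕ)

/-- The indices of the hubs in the optimal set. -/
def hubs (n : ℕ) : Set (ZMod n) := Set.range (Function.uncurry (hubIndex n))

theorem injective_uncurry_hubIndex (hn : 2 ≤ n) :
    Function.Injective (Function.uncurry (hubIndex n)) := by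
  rintro ⟨s, ε⟩ ⟨t, δ⟩ h
  simp only [Function.uncurry_apply_pair, hubIndex] at h
  rw [ZMod.natCast_eq_natCast_iff', Nat.mod_eq_of_lt (by omega), Nat.mod_eq_of_lt (by omega)] at h
  rw [Prod.mk.injEq, Fin.ext_iff, Fin.ext_iff]
  omega

theorem natCast_mem_hubs (hn : 2 ≤ n) {a : ℕ} (ha : a ≤ n + 1) (hmod : a % 4 ≤ 1 ∨ n ≤ a) :
    (a : ZMod n) ∈ hubs n := by
  wlog hlt : a < n generalizing a
  · have := this (a := a - n) (by omega) (by omega) (by omega)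
    rwa [Nat.cast_sub (by omega), ZMod.natCast_self, sub_zero] at this
  refine ⟨(⟨a / 4, by omega⟩, ⟨a - min (4 * (a / 4)) (n - 2), by omega⟩), ?_⟩
  simp only [Function.uncurry_apply_pair, hubIndex]
  congr 1
  omega

theorem mem_hubs_cases (hn : 2 ≤ n) (i : ZMod n) :
    i ∈ hubs n ∨ i + 1 ∈ hubs n ∨ i - 1 ∈ hubs n ∧ i + 2 ∈ hubs n := by
  have : NeZero n := ⟨by omega⟩
  obtain ⟨a, ha, rfl⟩ : ∃ a < n, (a : ZMod n) = i := ⟨i.val, i.val_lt, i.natCast_zmod_val⟩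
  obtain hmod | hmod | hmod : a % 4 ≤ 1 ∨ a % 4 = 3 ∨ a % 4 = 2 := by omega
  · exact Or.inl (natCast_mem_hubs hn (by omega) (Or.inl hmod))
  · exact Or.inr (Or.inl (mod_cast natCast_mem_hubs hn (a := a + 1) (by omega) (by omega)))
  · refine Or.inr (Or.inr ⟨?_, mod_cast natCast_mem_hubs hn (a := a + 2) (by omega) (by omega)⟩)
    have := natCast_mem_hubs hn (a := a - 1) (by omega) (by omega)
    rwa [Nat.cast_sub (by omega), Nat.cast_one] at this

open Classical in
/-- The first position of the `i`-th petal that is dominated by a petal pair of the optimal set;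
the `petalOffset i` positions before it are left to the hubs. -/
noncomputable def petalOffset (i : ZMod n) : ℕ :=
  if i ∈ hubs n then 2 else if i + 1 ∈ hubs n then 0 else 1

theorem petalOffset_cases (hn : 2 ≤ n) (i : ZMod n) :
    petalOffset i = 2 ∧ i ∈ hubs n ∨ petalOffset i = 0 ∧ i + 1 ∈ hubs n ∨
      petalOffset i = 1 ∧ i - 1 ∈ hubs n ∧ i + 2 ∈ hubs n := by
  unfold petalOffset
  have := mem_hubs_cases hn i
  split_ifs <;> tauto

theorem petalOffset_le_two (i : ZMod n) : petalOffset i ≤ 2 := by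
  unfold petalOffset
  split_ifs <;> omega

/-- The vertices of the optimal set in `f_{n×(6k+4)}`, arranged in matched pairs: the hub pairs,
and `k` pairs in each petal, one every six positions. -/
noncomputable def pairVert (n k : ℕ) :
    Fin ((n + 3) / 4) ⊕ ZMod n × Fin k → Fin 2 → FlowerVert n (6 * k + 4)
  | Sum.inl s, ε => Sum.inl (hubIndex n s ε)
  | Sum.inr (i, t), ε => Sum.inr (i, ⟨6 * t + petalOffset i + 2 + ε, by
      have := petalOffset_le_two i
      omega⟩)

theorem flowerGraph_adj_pairVert (hn : n ≠ 1) {k : ℕ} (s : Fin ((n + 3) / 4) ⊕ ZMod n × Fin k) :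
    (flowerGraph n (6 * k + 4)).Adj (pairVert n k s 0) (pairVert n k s 1) := by
  rcases s with s | ⟨i, t⟩
  · exact (flowerGraph_adj_hub_hub hn).2 (Or.inl (by simp [hubIndex]))
  · exact flowerGraph_adj_petal_iff.2 (Or.inl ⟨_, rfl, Or.inl rfl⟩)

theorem injective_uncurry_pairVert (hn : 2 ≤ n) (k : ℕ) :
    Function.Injective (Function.uncurry (pairVert n k)) := by
  rintro ⟨s | ⟨i, t⟩, ε⟩ ⟨s' | ⟨i', t'⟩, ε'⟩ h <;>
    simp only [Function.uncurry_apply_pair, pairVert, Sum.inl.injEq, Sum.inr.injEq, Prod.mk.injEq,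
      Fin.mk.injEq, reduceCtorEq] at h
  · have := injective_uncurry_hubIndex hn (a₁ := (s, ε)) (a₂ := (s', ε')) h
    simp_all
  · obtain ⟨rfl, h⟩ := h
    simp only [Prod.mk.injEq, Sum.inr.injEq, Fin.ext_iff, true_and]
    omega

theorem exists_pairVert_edist_hub_le_two (hn : 2 ≤ n) {k : ℕ} (a : ZMod n) :
    ∃ s ε, (flowerGraph n (6 * k + 4)).edist (pairVert n k s ε) (Sum.inl a) ≤ (2 : ℕ) := by
  have hadj (b : ZMod n) : (flowerGraph n (6 * k + 4)).Adj (Sum.inl b) (Sum.inl (b + 1)) :=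
    (flowerGraph_adj_hub_hub (by omega)).2 (Or.inl rfl)
  rcases mem_hubs_cases hn a with ⟨⟨s, ε⟩, h⟩ | ⟨⟨s, ε⟩, h⟩ | ⟨⟨⟨s, ε⟩, h⟩, -⟩ <;>
    refine ⟨Sum.inl s, ε, edist_le_two_iff.2 ?_⟩ <;>
    simp only [Function.uncurry_apply_pair] at h <;> simp only [pairVert, h]
  · exact Or.inl trivial
  · exact Or.inr (Or.inl (hadj a).symm)
  · exact Or.inr (Or.inl (by simpa using hadj (a - 1)))

theorem exists_pairVert_edist_petal_le_two (hn : 2 ≤ n) {k : ℕ} (i : ZMod n)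
    (p : Fin (6 * k + 4 - 2)) :
    ∃ s ε, (flowerGraph n (6 * k + 4)).edist (pairVert n k s ε) (Sum.inr (i, p)) ≤ (2 : ℕ) := by
  simp only [flowerGraph_edist_petal_le_two_iff]
  by_cases hmid : petalOffset i ≤ p.val ∧ p.val < petalOffset i + 6 * k
  · refine ⟨Sum.inr (i, ⟨(p.val - petalOffset i) / 6, by omega⟩),
      ⟨(p.val - petalOffset i) % 6 / 5, by omega⟩, Or.inl ⟨_, rfl, ?_⟩⟩
    dsimp only
    omega
  have hlt := p.isLt
  have hub {b : ZMod n} (hb : b ∈ hubs n) : ∃ s ε, pairVert n k s ε = Sum.inl b := by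
    obtain ⟨⟨s, ε⟩, h⟩ := hb
    exact ⟨Sum.inl s, ε, congrArg Sum.inl h⟩
  rcases petalOffset_cases hn i with ⟨ho, hi⟩ | ⟨ho, hi⟩ | ⟨ho, hleft, hright⟩
  · obtain ⟨s, ε, h⟩ := hub hi
    exact ⟨s, ε, Or.inr (Or.inl ⟨by omega, h⟩)⟩
  · obtain ⟨s, ε, h⟩ := hub hi
    exact ⟨s, ε, Or.inr (Or.inr (Or.inl ⟨by omega, h⟩))⟩
  · by_cases hp : p.val = 0
    · obtain ⟨s, ε, h⟩ := hub hleft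
      refine ⟨s, ε, Or.inr (Or.inr (Or.inr (Or.inl ⟨hp, ?_⟩)))⟩
      exact h ▸ (flowerGraph_adj_hub_hub (by omega)).2 (Or.inl (by ring))
    · obtain ⟨s, ε, h⟩ := hub hright
      refine ⟨s, ε, Or.inr (Or.inr (Or.inr (Or.inr ⟨by omega, ?_⟩)))⟩
      exact h ▸ (flowerGraph_adj_hub_hub (by omega)).2 (Or.inr (by ring))

theorem isKDistPairedDominating_range_pairVert (hn : 2 ≤ n) (k : ℕ) :
    IsKDistPairedDominating (flowerGraph n (6 * k + 4)) 2
      (Set.range (Function.uncurry (pairVert n k))) := by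
  refine isKDistPairedDominating_range_of_pairs (flowerGraph_adj_pairVert (by omega))
    (injective_uncurry_pairVert hn k) ?_
  rintro (a | ⟨i, p⟩)
  exacts [exists_pairVert_edist_hub_le_two hn a, exists_pairVert_edist_petal_le_two hn i p]

theorem ncard_range_pairVert (hn : 2 ≤ n) (k : ℕ) :
    (Set.range (Function.uncurry (pairVert n k))).ncard = 2 * (n * k + (n + 3) / 4) := by
  have : NeZero n := ⟨by omega⟩
  rw [Set.ncard_range_of_injective (injective_uncurry_pairVert hn k), Nat.card_eq_fintype_card]
  simp only [Fintype.card_prod, Fintype.card_sum, Fintype.card_fin, ZMod.card]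
  ring

end UpperBound

theorem kDistPairedDomNum_flowerGraph {n : ℕ} (hn : 3 ≤ n) (k : ℕ) :
    kDistPairedDomNum (flowerGraph n (6 * k + 4)) 2 = 2 * (n * k + (n + 3) / 4) :=
  kDistPairedDomNum_eq_of_forall_le (isKDistPairedDominating_range_pairVert (by omega) k)
    (ncard_range_pairVert (by omega) k) fun _ hD => hD.le_ncard_of_flowerGraph hn

theorem ceil_two_mul_mul_sub_div_twelve (n k : ℕ) :
    ⌈(2 * (n : ℚ) * (6 * k + 4 : ℕ) - 5 * n) / 12⌉ = (n * k + (n + 3) / 4 : ℕ) := by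
  have hle : n ≤ 4 * ((n + 3) / 4) := by omega
  have hlt : 4 * ((n + 3) / 4) < n + 4 := by omega
  generalize (n + 3) / 4 = c at *
  qify at hle hlt
  rw [Int.ceil_eq_iff]
  push_cast
  constructor <;> linarith

theorem flower_twoDistPairedDomNum_mod6_4 (n m : ℕ) (hn : 3 ≤ n) (hm : 3 ≤ m)
    (h : m % 6 = 4) :
    (kDistPairedDomNum (flowerGraph n m) 2 : ℤ) = 2 * ⌈(2 * (n : ℚ) * m - 5 * n) / 12⌉ := by
  obtain ⟨k, rfl⟩ : ∃ k, m = 6 * k + 4 := ⟨m / 6, by omega⟩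
  rw [kDistPairedDomNum_flowerGraph hn, ceil_two_mul_mul_sub_div_twelve]
  push_cast
  rfl
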